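/- Let d and M be positive integers, λ > 0, T > 0, C ≥ 0, let u, h : ℝ^d → ℝ^d both be Lipschitz continuous with constant C, and let X be an ℕ-valued random variable with the Poisson distribution with parameter λT/M. Then for every real number p ≥ 1, every z ∈ {−1, 1} and every x ∈ ℝ^d with ‖x‖ ≥ 1, E[exp(p·z·⟨x + (T/M)·u(x), h(x)⟩·‖x‖^{−2}·(X − λT/M))] ≤ exp((e^{κ} + κ)·λT/M), where κ = p·(C + ‖h(0)‖)·(1 + TC + T‖u(0)‖). -/

import Mathlib

open MeasureTheory
open scoped RealInnerProductSpace

open ProbabilityTheory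
open scoped ENNReal NNReal

/-!
If `X` is Poisson with rate `r`, then `E[exp (a (X - r))] = exp (r (exp a - 1 - a))`. Here `a` is a
multiple of `⟪x + t • u x, h x⟫ / ‖x‖ ^ 2`; Lipschitz maps grow at most linearly away from the unit
ball, so Cauchy–Schwarz bounds `|a|` by `κ`, and `exp a - 1 - a ≤ exp κ + κ`.

The mass function alone determines the law of `X`: if the outer measures of the fibres of `X` sum to
`P univ`, then a set `X ⁻¹' s` and its complement have outer measures adding up to `P univ`, so
`X ⁻¹' s` is null measurable. Hence `X` is almost everywhere measurable.
-/

section Law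

variable {Ω ι : Type*} [MeasurableSpace Ω] {P : Measure Ω}

lemma nullMeasurableSet_of_measure_add_measure_compl_le [IsFiniteMeasure P] {s : Set Ω}
    (hs : P s + P sᶜ ≤ P Set.univ) : NullMeasurableSet s P := by
  set core : Set Ω := (toMeasurable P sᶜ)ᶜ
  have core_measurable : MeasurableSet core := (measurableSet_toMeasurable P sᶜ).compl
  have core_subset : core ⊆ s := Set.compl_subset_comm.1 (subset_toMeasurable P sᶜ)
  have measure_le : P s ≤ P core := by
    rw [measure_compl (measurableSet_toMeasurable P sᶜ) (measure_ne_top P _),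
      measure_toMeasurable]
    exact ENNReal.le_sub_of_add_le_right (measure_ne_top P _) hs
  exact core_measurable.nullMeasurableSet.congr <|
    ae_eq_of_subset_of_measure_ge core_subset measure_le core_measurable.nullMeasurableSet
      (measure_ne_top P s)

variable [MeasurableSpace ι] [MeasurableSingletonClass ι] [Countable ι] {ν : Measure ι} {X : Ω → ι}

lemma measure_preimage_le_of_singleton (hX : ∀ k, P (X ⁻¹' {k}) ≤ ν {k}) (s : Set ι) :
    P (X ⁻¹' s) ≤ ν s := by
  have hs : s.Countable := s.to_countable
  calc P (X ⁻¹' s) = P (⋃ k ∈ s, X ⁻¹' {k}) := by rw [Set.biUnion_preimage_singleton]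
    _ ≤ ∑' k : s, P (X ⁻¹' {(k : ι)}) := measure_biUnion_le P hs _
    _ ≤ ∑' k : s, ν {(k : ι)} := ENNReal.tsum_le_tsum fun k => hX k
    _ = ν s := tsum_measure_preimage_singleton (f := id) hs fun k _ => measurableSet_singleton k

lemma aemeasurable_of_measure_preimage_singleton_le [IsFiniteMeasure P]
    (hX : ∀ k, P (X ⁻¹' {k}) ≤ ν {k}) (huniv : ν Set.univ ≤ P Set.univ) : AEMeasurable X P := by
  refine NullMeasurable.aemeasurable fun s hs =>
    nullMeasurableSet_of_measure_add_measure_compl_le ?_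
  calc P (X ⁻¹' s) + P (X ⁻¹' sᶜ) ≤ ν s + ν sᶜ := by
        gcongr <;> exact measure_preimage_le_of_singleton hX _
    _ = ν Set.univ := measure_add_measure_compl hs
    _ ≤ P Set.univ := huniv

lemma hasLaw_of_measure_preimage_singleton_eq [IsFiniteMeasure P]
    (hX : ∀ k, P (X ⁻¹' {k}) = ν {k}) (huniv : ν Set.univ ≤ P Set.univ) : HasLaw X ν P := by
  have X_aemeasurable : AEMeasurable X P :=
    aemeasurable_of_measure_preimage_singleton_le (fun k => (hX k).le) huniv
  refine ⟨X_aemeasurable, Measure.ext_of_singleton fun k => ?_⟩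
  rw [Measure.map_apply_of_aemeasurable X_aemeasurable (measurableSet_singleton k), hX]

end Law

section Poisson

lemma mgf_natCast_poissonMeasure (r : ℝ≥0) (t : ℝ) :
    mgf ((↑) : ℕ → ℝ) (poissonMeasure r) t = Real.exp (r * (Real.exp t - 1)) := by
  have hsum : HasSum (fun n : ℕ => Real.exp (-r) * ((r * Real.exp t) ^ n / n.factorial))
      (Real.exp (-r) * Real.exp (r * Real.exp t)) := by
    simpa only [← Real.exp_eq_exp_ℝ] using
      (NormedSpace.expSeries_div_hasSum_exp (r * Real.exp t)).mul_left (Real.exp (-r))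
  calc mgf ((↑) : ℕ → ℝ) (poissonMeasure r) t
      = ∑' n : ℕ, (Real.exp (-r) * r ^ n / n.factorial) • Real.exp (t * n) :=
        integral_poissonMeasure r _
    _ = ∑' n : ℕ, Real.exp (-r) * ((r * Real.exp t) ^ n / n.factorial) := by
        refine tsum_congr fun n => ?_
        rw [mul_comm t, Real.exp_nat_mul, mul_pow, smul_eq_mul]
        ring
    _ = Real.exp (-r) * Real.exp (r * Real.exp t) := hsum.tsum_eq
    _ = Real.exp (r * (Real.exp t - 1)) := by rw [← Real.exp_add]; ring_nf

lemma integral_exp_mul_sub_of_hasLaw_poissonMeasure {Ω : Type*} [MeasurableSpace Ω]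
    {P : Measure Ω} {X : Ω → ℕ} {r : ℝ≥0} (hX : HasLaw X (poissonMeasure r) P) (a : ℝ) :
    ∫ ω, Real.exp (a * ((X ω : ℝ) - r)) ∂P = Real.exp (r * (Real.exp a - 1 - a)) := by
  calc ∫ ω, Real.exp (a * ((X ω : ℝ) - r)) ∂P
      = ∫ n : ℕ, Real.exp (a * (n - r)) ∂poissonMeasure r :=
        hX.integral_comp (f := fun n : ℕ => Real.exp (a * (n - r))) .of_discrete
    _ = mgf (fun n : ℕ => (n : ℝ) - r) (poissonMeasure r) a := rfl
    _ = Real.exp (r * (Real.exp a - 1)) * Real.exp (-(a * r)) := by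
        simp only [sub_eq_add_neg (_ : ℝ) (r : ℝ), mgf_add_const, mgf_natCast_poissonMeasure,
          mul_neg]
    _ = Real.exp (r * (Real.exp a - 1 - a)) := by rw [← Real.exp_add]; ring_nf

end Poisson

section LipschitzCoefficient

lemma norm_le_mul_norm_of_lipschitzWith {E F : Type*} [SeminormedAddCommGroup E]
    [SeminormedAddCommGroup F] {K : ℝ≥0} {f : E → F} (hf : LipschitzWith K f) {x : E}
    (hx : 1 ≤ ‖x‖) : ‖f x‖ ≤ (K + ‖f 0‖) * ‖x‖ := by
  calc ‖f x‖ ≤ ‖f 0‖ + ‖f x - f 0‖ := norm_le_norm_add_norm_sub' _ _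
    _ ≤ ‖f 0‖ * ‖x‖ + K * ‖x‖ := by
        gcongr
        · exact le_mul_of_one_le_right (norm_nonneg _) hx
        · simpa using hf.norm_sub_le x 0
    _ = (K + ‖f 0‖) * ‖x‖ := by ring

variable {E : Type*} [SeminormedAddCommGroup E] [InnerProductSpace ℝ E] {K L : ℝ≥0} {u h : E → E}
  {t : ℝ} {x : E}

lemma abs_inner_add_smul_div_sq_le_of_lipschitzWith (hu : LipschitzWith K u)
    (hh : LipschitzWith L h) (ht : 0 ≤ t) (hx : 1 ≤ ‖x‖) :
    |⟪x + t • u x, h x⟫ / ‖x‖ ^ 2| ≤ (L + ‖h 0‖) * (1 + t * K + t * ‖u 0‖) := by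
  have norm_add_smul_le : ‖x + t • u x‖ ≤ (1 + t * K + t * ‖u 0‖) * ‖x‖ := by
    calc ‖x + t • u x‖ ≤ ‖x‖ + t * ‖u x‖ := by
          simpa only [norm_smul, Real.norm_of_nonneg ht] using norm_add_le x (t • u x)
      _ ≤ ‖x‖ + t * ((K + ‖u 0‖) * ‖x‖) := by
          gcongr
          exact norm_le_mul_norm_of_lipschitzWith hu hx
      _ = (1 + t * K + t * ‖u 0‖) * ‖x‖ := by ring
  rw [abs_div, abs_of_nonneg (sq_nonneg ‖x‖), div_le_iff₀ (by positivity)]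
  calc |⟪x + t • u x, h x⟫| ≤ ‖x + t • u x‖ * ‖h x‖ := abs_real_inner_le_norm _ _
    _ ≤ (1 + t * K + t * ‖u 0‖) * ‖x‖ * ((L + ‖h 0‖) * ‖x‖) := by
        gcongr
        exact norm_le_mul_norm_of_lipschitzWith hh hx
    _ = (L + ‖h 0‖) * (1 + t * K + t * ‖u 0‖) * ‖x‖ ^ 2 := by ring

lemma integral_exp_mul_inner_mul_sub_le_of_lipschitzWith (hu : LipschitzWith K u)
    (hh : LipschitzWith L h) {Ω : Type*} [MeasurableSpace Ω] {P : Measure Ω} {X : Ω → ℕ} {r : ℝ≥0}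
    (hX : HasLaw X (poissonMeasure r) P) (ht : 0 ≤ t) (hx : 1 ≤ ‖x‖) {q κ : ℝ}
    (hκ : |q| * (L + ‖h 0‖) * (1 + t * K + t * ‖u 0‖) ≤ κ) :
    ∫ ω, Real.exp (q * (⟪x + t • u x, h x⟫ / ‖x‖ ^ 2) * ((X ω : ℝ) - r)) ∂P
      ≤ Real.exp ((Real.exp κ + κ) * r) := by
  set a : ℝ := q * (⟪x + t • u x, h x⟫ / ‖x‖ ^ 2)
  have abs_a_le : |a| ≤ κ := by
    calc |a| = |q| * |⟪x + t • u x, h x⟫ / ‖x‖ ^ 2| := abs_mul _ _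
      _ ≤ |q| * ((L + ‖h 0‖) * (1 + t * K + t * ‖u 0‖)) := by
          gcongr
          exact abs_inner_add_smul_div_sq_le_of_lipschitzWith hu hh ht hx
      _ ≤ κ := by rwa [← mul_assoc]
  obtain ⟨neg_le_a, a_le⟩ := abs_le.1 abs_a_le
  have exponent_le : Real.exp a - 1 - a ≤ Real.exp κ + κ := by
    linarith [Real.exp_le_exp.2 a_le]
  rw [integral_exp_mul_sub_of_hasLaw_poissonMeasure hX, mul_comm]
  gcongr

theorem poisson_semi_taming_exp_bound_general {M lam T C : ℝ} (hM : 1 ≤ M) (hlam : 0 ≤ lam)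
    (hT : 0 ≤ T) (hC : 0 ≤ C) (hu : ∀ x y, ‖u x - u y‖ ≤ C * ‖x - y‖)
    (hh : ∀ x y, ‖h x - h y‖ ≤ C * ‖x - y‖)
    {Ω : Type*} [MeasurableSpace Ω] {P : Measure Ω} [IsProbabilityMeasure P] {X : Ω → ℕ}
    (hX : ∀ k : ℕ, P {ω | X ω = k}
      = ENNReal.ofReal (Real.exp (-(lam * T / M)) * (lam * T / M) ^ k / (Nat.factorial k)))
    {p z : ℝ} (hp : 0 ≤ p) (hz : |z| ≤ 1) (hx : 1 ≤ ‖x‖)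
    {κ : ℝ} (hκ : κ = p * (C + ‖h 0‖) * (1 + T * C + T * ‖u 0‖)) :
    ∫ ω, Real.exp (p * z * (⟪x + (T / M) • u x, h x⟫ / ‖x‖ ^ 2) * ((X ω : ℝ) - lam * T / M)) ∂P
      ≤ Real.exp ((Real.exp κ + κ) * (lam * T / M)) := by
  lift C to ℝ≥0 using hC
  obtain ⟨r, hr⟩ : ∃ r : ℝ≥0, (r : ℝ) = lam * T / M := ⟨⟨lam * T / M, by positivity⟩, rfl⟩
  simp only [← hr] at hX ⊢
  have u_lipschitz : LipschitzWith C u := .of_dist_le_mul fun x y => by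
    simpa only [dist_eq_norm] using hu x y
  have h_lipschitz : LipschitzWith C h := .of_dist_le_mul fun x y => by
    simpa only [dist_eq_norm] using hh x y
  have X_law : HasLaw X (poissonMeasure r) P :=
    hasLaw_of_measure_preimage_singleton_eq
      (fun k => (hX k).trans (poissonMeasure_singleton r k).symm) (by simp)
  have step_le : T / M ≤ T := div_le_self hT hM
  have abs_weight_le : |p * z| ≤ p := by
    simpa only [abs_mul, abs_of_nonneg hp] using mul_le_of_le_one_right hp hz
  refine integral_exp_mul_inner_mul_sub_le_of_lipschitzWith u_lipschitz h_lipschitz X_law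
    (by positivity) hx ?_
  rw [hκ]
  gcongr

end LipschitzCoefficient

/-- If `u, h : ℝ^d → ℝ^d` are Lipschitz with constant `C` and `X` has the Poisson
distribution with parameter `λT/M`, then for `p ≥ 1`, `z ∈ {-1,1}` and `‖x‖ ≥ 1`,
`E[exp (p z ⟨x + (T/M) u(x), h(x)⟩ ‖x‖⁻² (X - λT/M))] ≤ exp ((e^κ + κ) λT/M)`,
where `κ = p (C + ‖h 0‖)(1 + TC + T‖u 0‖)`. -/
theorem poisson_semi_taming_exp_bound (d M : ℕ) (hd : 0 < d) (hM : 0 < M)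
    (lam T C : ℝ) (hlam : 0 < lam) (hT : 0 < T) (hC : 0 ≤ C)
    (u h : EuclideanSpace ℝ (Fin d) → EuclideanSpace ℝ (Fin d))
    (hu : ∀ x y, ‖u x - u y‖ ≤ C * ‖x - y‖)
    (hh : ∀ x y, ‖h x - h y‖ ≤ C * ‖x - y‖)
    {Ω : Type*} [MeasurableSpace Ω] (P : Measure Ω) [IsProbabilityMeasure P]
    (X : Ω → ℕ)
    (hX : ∀ k : ℕ, P {ω | X ω = k}
      = ENNReal.ofReal (Real.exp (-(lam * T / M)) * (lam * T / M) ^ k / (Nat.factorial k)))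
    (p : ℝ) (hp : 1 ≤ p) (z : ℝ) (hz : z = -1 ∨ z = 1)
    (x : EuclideanSpace ℝ (Fin d)) (hx : 1 ≤ ‖x‖)
    (κ : ℝ) (hκ : κ = p * (C + ‖h 0‖) * (1 + T * C + T * ‖u 0‖)) :
    (∫ ω, Real.exp (p * z * (⟪x + (T / M) • u x, h x⟫ / ‖x‖ ^ 2)
        * ((X ω : ℝ) - lam * T / M)) ∂P)
      ≤ Real.exp ((Real.exp κ + κ) * (lam * T / M)) := by
  have abs_z_le : |z| ≤ 1 := by rcases hz with rfl | rfl <;> simp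
  exact poisson_semi_taming_exp_bound_general (Nat.one_le_cast.2 hM) hlam.le hT.le hC hu hh hX
    (zero_le_one.trans hp) abs_z_le hx hκ
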